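/- Let m = r + (n−1)s and let κ̂ : V^{⊗r}⊗(V*)^{⊗s} → V^{⊗m} be the injective R-linear map id_{V^{⊗r}}⊗κ^{⊗s}, where κ(v*_l) = (−q)^l Σ_{w∈S_{n−1}}(−q)^{ℓ(w)} v_{(1,…,l̂,…,n)·w}. Suppose φ ∈ End_R(V^{⊗m}) commutes with all Hecke operators S_1,…,S_{m−1}, and write φ(v_t) = Σ_{s∈I(n,m)} γ(s,t)v_s. Then: (i) the R-linear form on degree-m monomials given by x_{s_1t_1}⋯x_{s_mt_m} ↦ γ(s,t) descends to a well-defined form φ̃ on A_q(n,m); (ii) φ preserves the image of κ̂; and (iii) for all k ∈ I(n,r), l ∈ I(n,s): φ(κ̂(v_{k|l})) = Σ_{i∈I(n,r), j∈I(n,s)} φ̃( ι(x_{i_1k_1}⋯x_{i_rk_r}·x*_{j_1l_1}⋯x*_{j_sl_s}) ) · κ̂(v_{i|j}). -/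

import Mathlib

open scoped BigOperators

/-- Free algebra on two families of generators `x_{ij}` and `x*_{ij}`. -/
abbrev FA2 (R : Type*) [CommRing R] (n : ℕ) :=
  FreeAlgebra R ((Fin n × Fin n) ⊕ (Fin n × Fin n))

/-- The generator `x_{ij}`. -/
def Xg (R : Type*) [CommRing R] (n : ℕ) (i j : Fin n) : FA2 R n :=
  FreeAlgebra.ι R (Sum.inl (i, j))

/-- The generator `x*_{ij}`. -/
def Xs (R : Type*) [CommRing R] (n : ℕ) (i j : Fin n) : FA2 R n :=
  FreeAlgebra.ι R (Sum.inr (i, j))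

/-- The monomial in the `x`-generators given by a list of index pairs. -/
def xW (R : Type*) [CommRing R] (n : ℕ) (l : List (Fin n × Fin n)) : FA2 R n :=
  (l.map fun p => Xg R n p.1 p.2).prod

/-- The monomial in the `x*`-generators given by a list of index pairs. -/
def xsW (R : Type*) [CommRing R] (n : ℕ) (l : List (Fin n × Fin n)) : FA2 R n :=
  (l.map fun p => Xs R n p.1 p.2).prod

/-- The quantum-matrix relations among the `x`-generators (parameter `q`). -/
def XRel2 (R : Type*) [CommRing R] (q : Rˣ) (n : ℕ) (h : FA2 R n) : Prop :=
  (∃ i j k : Fin n, i < j ∧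
    h = Xg R n i k * Xg R n j k - (q : R) • (Xg R n j k * Xg R n i k)) ∨
  (∃ k i j : Fin n, i < j ∧
    h = Xg R n k i * Xg R n k j - (q : R) • (Xg R n k j * Xg R n k i)) ∨
  (∃ i j k l : Fin n, i < k ∧ l < j ∧
    h = Xg R n i j * Xg R n k l - Xg R n k l * Xg R n i j) ∨
  (∃ i j k l : Fin n, i < k ∧ j < l ∧
    h = Xg R n i j * Xg R n k l - Xg R n k l * Xg R n i j -
      ((q : R) - ((q⁻¹ : Rˣ) : R)) • (Xg R n i l * Xg R n k j))

/-- The quantum-matrix relations among the `x*`-generators (parameter `q⁻¹`). -/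
def XsRel2 (R : Type*) [CommRing R] (q : Rˣ) (n : ℕ) (h : FA2 R n) : Prop :=
  (∃ i j k : Fin n, i < j ∧
    h = Xs R n i k * Xs R n j k - ((q⁻¹ : Rˣ) : R) • (Xs R n j k * Xs R n i k)) ∨
  (∃ k i j : Fin n, i < j ∧
    h = Xs R n k i * Xs R n k j - ((q⁻¹ : Rˣ) : R) • (Xs R n k j * Xs R n k i)) ∨
  (∃ i j k l : Fin n, i < k ∧ l < j ∧
    h = Xs R n i j * Xs R n k l - Xs R n k l * Xs R n i j) ∨
  (∃ i j k l : Fin n, i < k ∧ j < l ∧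
    h = Xs R n i j * Xs R n k l - Xs R n k l * Xs R n i j +
      ((q : R) - ((q⁻¹ : Rˣ) : R)) • (Xs R n i l * Xs R n k j))

/-- The generating set of the submodule `Y` of relations defining
`A_q(n;r,s)` inside `F(n,r) ⊗ F_*(n,s)` (monomials are written with all
`x`-letters in front of all `x*`-letters). -/
def Ygen (R : Type*) [CommRing R] (q : Rˣ) (n : ℕ) (r s : ℕ) : Set (FA2 R n) :=
  {a | (∃ (u v w : List (Fin n × Fin n)) (h2 : FA2 R n),
          u.length + v.length + 2 = r ∧ w.length = s ∧ XRel2 R q n h2 ∧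
          a = xW R n u * h2 * xW R n v * xsW R n w) ∨
       (∃ (u w1 w2 : List (Fin n × Fin n)) (h2 : FA2 R n),
          u.length = r ∧ w1.length + w2.length + 2 = s ∧ XsRel2 R q n h2 ∧
          a = xW R n u * xsW R n w1 * h2 * xsW R n w2) ∨
       (∃ (i j : Fin n) (u v w1 w2 : List (Fin n × Fin n)),
          i ≠ j ∧ u.length + v.length + 1 = r ∧ w1.length + w2.length + 1 = s ∧
          a = ∑ k : Fin n,
            xW R n u * Xg R n i k * xW R n v * xsW R n w1 * Xs R n j k * xsW R n w2) ∨
       (∃ (i j : Fin n) (u v w1 w2 : List (Fin n × Fin n)),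
          i ≠ j ∧ u.length + v.length + 1 = r ∧ w1.length + w2.length + 1 = s ∧
          a = ∑ k : Fin n, ((q ^ (2 * ((k : ℕ) + 1)) : Rˣ) : R) •
            (xW R n u * Xg R n k i * xW R n v * xsW R n w1 * Xs R n k j * xsW R n w2)) ∨
       (∃ (i j : Fin n) (u v w1 w2 : List (Fin n × Fin n)),
          u.length + v.length + 1 = r ∧ w1.length + w2.length + 1 = s ∧
          a = (∑ k : Fin n, ((q ^ (2 * (k : ℤ) - 2 * (i : ℤ)) : Rˣ) : R) •
                (xW R n u * Xg R n k i * xW R n v * xsW R n w1 * Xs R n k i * xsW R n w2)) -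
              ∑ k : Fin n,
                xW R n u * Xg R n j k * xW R n v * xsW R n w1 * Xs R n j k * xsW R n w2)}

/-- The submodule `Y` of relations defining `A_q(n;r,s)`. -/
def Ysub (R : Type*) [CommRing R] (q : Rˣ) (n : ℕ) (r s : ℕ) : Submodule R (FA2 R n) :=
  Submodule.span R (Ygen R q n r s)

/-- The `R`-span `F(n,r) ⊗ F_*(n,s)` of the bidegree-`(r,s)` monomials
(`x`-letters first). -/
def Frs (R : Type*) [CommRing R] (n : ℕ) (r s : ℕ) : Submodule R (FA2 R n) :=
  Submodule.span R
    {a | ∃ u v : List (Fin n × Fin n), u.length = r ∧ v.length = s ∧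
          a = xW R n u * xsW R n v}

/-- The element `𝔡et_q^{(k)}` of `A_q(n;k,k)` (here: its canonical
representative in the span of monomials), defined recursively by
`𝔡et_q^{(0)} = 1` and `𝔡et_q^{(k)} = Σ_l x_{1l}·𝔡et_q^{(k−1)}·x*_{1l}`. -/
noncomputable def detMix (R : Type*) [CommRing R] (n : ℕ) [NeZero n] : ℕ → FA2 R n
  | 0 => 1
  | (k + 1) => ∑ l : Fin n, Xg R n 0 l * detMix R n k * Xs R n 0 l

/-- Number of inversions of a permutation of `Fin k` (its Coxeter length). -/
def invCount {k : ℕ} (w : Equiv.Perm (Fin k)) : ℕ :=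
  ((Finset.univ : Finset (Fin k × Fin k)).filter
    (fun p => p.1 < p.2 ∧ w p.2 < w p.1)).card

/-- Ordered product of a tuple of elements of a (possibly noncommutative) monoid. -/
def oprod {A : Type*} [Monoid A] {k : ℕ} (g : Fin k → A) : A :=
  (List.ofFn g).prod

/-- Number of inversions of a finite sequence. -/
def seqInv {n k : ℕ} (rows : Fin k → Fin n) : ℕ :=
  ((Finset.univ : Finset (Fin k × Fin k)).filter
    (fun p => p.1 < p.2 ∧ rows p.2 < rows p.1)).card

/-- The general right quantum minor `(rows | cols)_r` with respect to a family
`gen` of generators and parameter `qq`.  For strictly increasing row sequences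
it is `Σ_w (−qq)^{ℓ(w)}·gen(rows(w 1), cols 1)⋯gen(rows(w k), cols k)`; it is
extended to arbitrary row sequences by the exchange rule
`(…i_l i_{l+1}…|cols)_r = −qq⁻¹·(…i_{l+1} i_l…|cols)_r` for `i_l > i_{l+1}`
(so an inversion contributes a factor `−qq⁻¹`), and it vanishes when two row
indices coincide. -/
noncomputable def genMinorR {R : Type*} [CommRing R] {A : Type*} [Ring A] [Algebra R A]
    (qq : Rˣ) {n k : ℕ} (gen : Fin n → Fin n → A) (rows cols : Fin k → Fin n) : A :=
  if Function.Injective rows then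
    ((((-qq⁻¹) ^ seqInv rows : Rˣ) : R) • ∑ w : Equiv.Perm (Fin k),
      (((-qq) ^ invCount w : Rˣ) : R) •
        oprod (fun t => gen ((rows ∘ Tuple.sort rows) (w t)) (cols t)))
  else 0

/-- The submodule spanned by the products `m·𝔡et_q^{(1)}·m*` with `m` a
degree-`a` monomial in the `x`-generators and `m*` a degree-`b` monomial in
the `x*`-generators. -/
noncomputable def Zdet (R : Type*) [CommRing R] (n : ℕ) [NeZero n] (a b : ℕ) :
    Submodule R (FA2 R n) :=
  Submodule.span R
    {z | ∃ u v : List (Fin n × Fin n), u.length = a ∧ v.length = b ∧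
          z = xW R n u * detMix R n 1 * xsW R n v}

/-- The increasing enumeration of `{1,…,n} \ {i}` (0-based). -/
def omitIdx {n : ℕ} (i : Fin n) (t : Fin (n - 1)) : Fin n :=
  if (t : ℕ) < (i : ℕ) then ⟨t, by have := t.2; omega⟩ else ⟨(t : ℕ) + 1, by have := t.2; omega⟩

/-- The sequence `i, f 0, f 1, …` of length `n` (prepending an entry to a
sequence of length `n-1`). -/
def consSeq {n : ℕ} (i : Fin n) (f : Fin (n - 1) → Fin n) : Fin n → Fin n :=
  fun t => if h : (t : ℕ) = 0 then i else f ⟨(t : ℕ) - 1, by have := t.2; omega⟩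

/-- The defining relations of the quantum matrix bialgebra `A_q(n)`. -/
inductive QMRel (R : Type*) [CommRing R] (q : Rˣ) (n : ℕ) :
    FreeAlgebra R (Fin n × Fin n) → FreeAlgebra R (Fin n × Fin n) → Prop
  | col {i j k : Fin n} (h : i < j) :
      QMRel R q n (FreeAlgebra.ι R (i, k) * FreeAlgebra.ι R (j, k))
        ((q : R) • (FreeAlgebra.ι R (j, k) * FreeAlgebra.ι R (i, k)))
  | row {k i j : Fin n} (h : i < j) :
      QMRel R q n (FreeAlgebra.ι R (k, i) * FreeAlgebra.ι R (k, j))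
        ((q : R) • (FreeAlgebra.ι R (k, j) * FreeAlgebra.ι R (k, i)))
  | comm {i j k l : Fin n} (h1 : i < k) (h2 : l < j) :
      QMRel R q n (FreeAlgebra.ι R (i, j) * FreeAlgebra.ι R (k, l))
        (FreeAlgebra.ι R (k, l) * FreeAlgebra.ι R (i, j))
  | qcomm {i j k l : Fin n} (h1 : i < k) (h2 : j < l) :
      QMRel R q n (FreeAlgebra.ι R (i, j) * FreeAlgebra.ι R (k, l))
        (FreeAlgebra.ι R (k, l) * FreeAlgebra.ι R (i, j) +
          ((q : R) - ((q⁻¹ : Rˣ) : R)) • (FreeAlgebra.ι R (i, l) * FreeAlgebra.ι R (k, j)))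

/-- The quantum matrix bialgebra `A_q(n)`. -/
abbrev AqAlg (R : Type*) [CommRing R] (q : Rˣ) (n : ℕ) := RingQuot (QMRel R q n)

/-- The generator `x_{ij}` of `A_q(n)`. -/
def xq (R : Type*) [CommRing R] (q : Rˣ) (n : ℕ) (i j : Fin n) : AqAlg R q n :=
  RingQuot.mkAlgHom R (QMRel R q n) (FreeAlgebra.ι R (i, j))

/-- The right quantum minor `(i_1 … i_k | j_1 … j_k)_r` for an increasing row
sequence and an arbitrary column sequence. -/
noncomputable def qMinorR (R : Type*) [CommRing R] (q : Rˣ) (n : ℕ) {k : ℕ}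
    (rows cols : Fin k → Fin n) : AqAlg R q n :=
  ∑ w : Equiv.Perm (Fin k),
    (((-q) ^ invCount w : Rˣ) : R) • oprod (fun t => xq R q n (rows (w t)) (cols t))

/-- The left quantum minor `(i_1 … i_k | j_1 … j_k)_l` for an arbitrary row
sequence and an increasing column sequence. -/
noncomputable def qMinorL (R : Type*) [CommRing R] (q : Rˣ) (n : ℕ) {k : ℕ}
    (rows cols : Fin k → Fin n) : AqAlg R q n :=
  ∑ w : Equiv.Perm (Fin k),
    (((-q) ^ invCount w : Rˣ) : R) • oprod (fun t => xq R q n (rows t) (cols (w t)))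

/-- The quantum determinant. -/
noncomputable def detq (R : Type*) [CommRing R] (q : Rˣ) (n : ℕ) : AqAlg R q n :=
  qMinorR R q n (fun t => t) (fun t => t)

/-- The complementary `(n-1) × (n-1)` quantum minor `(1…î…n | 1…ĵ…n)`. -/
noncomputable def compMinor (R : Type*) [CommRing R] (q : Rˣ) (n : ℕ) (i j : Fin n) :
    AqAlg R q n :=
  qMinorR R q n (omitIdx i) (omitIdx j)

/-- The algebra homomorphism `ι̂` from the free algebra on the `x`- and
`x*`-generators to `A_q(n)`, determined by `x_{ij} ↦ x_{ij}` and
`x*_{ij} ↦ (−q)^{j−i}·(1…î…n | 1…ĵ…n)`. -/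
noncomputable def iotaHat (R : Type*) [CommRing R] (q : Rˣ) (n : ℕ) :
    FA2 R n →ₐ[R] AqAlg R q n :=
  FreeAlgebra.lift R fun g =>
    match g with
    | Sum.inl (i, j) => xq R q n i j
    | Sum.inr (i, j) => (((-q) ^ ((j : ℤ) - (i : ℤ)) : Rˣ) : R) • compMinor R q n i j

/-- The homogeneous component `A_q(n,m)`: the `R`-span in `A_q(n)` of the
degree-`m` monomials. -/
noncomputable def AqDeg (R : Type*) [CommRing R] (q : Rˣ) (n : ℕ) (m : ℕ) :
    Submodule R (AqAlg R q n) :=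
  Submodule.span R
    {a | ∃ g : List (Fin n × Fin n), g.length = m ∧ a = (g.map fun p => xq R q n p.1 p.2).prod}

/-- Tensor space `V^{⊗m}` for `V = R^n`, with basis indexed by multi-indices. -/
abbrev TSp (R : Type*) [CommRing R] (n m : ℕ) := ((Fin m → Fin n) →₀ R)

/-- The multi-index `j` with the entries in positions `p`, `p+1` swapped. -/
def swapIdx {n m : ℕ} (j : Fin m → Fin n) (p : ℕ) (hp : p + 1 < m) : Fin m → Fin n :=
  Function.update (Function.update j ⟨p, by omega⟩ (j ⟨p + 1, hp⟩)) ⟨p + 1, hp⟩ (j ⟨p, by omega⟩)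

/-- The Hecke operator `S_t` (`t = p+1`, acting on tensor positions `p`, `p+1`,
0-based) on tensor space. -/
noncomputable def heckeOpX (R : Type*) [CommRing R] (q : Rˣ) (n m : ℕ)
    (p : ℕ) (hp : p + 1 < m) : TSp R n m →ₗ[R] TSp R n m :=
  Finsupp.linearCombination R fun j : Fin m → Fin n =>
    if j ⟨p, by omega⟩ = j ⟨p + 1, hp⟩ then
      ((q⁻¹ : Rˣ) : R) • Finsupp.single j 1
    else if j ⟨p, by omega⟩ < j ⟨p + 1, hp⟩ then
      Finsupp.single (swapIdx j p hp) 1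
    else
      Finsupp.single (swapIdx j p hp) 1 + (((q⁻¹ : Rˣ) : R) - (q : R)) • Finsupp.single j 1

/-- Concatenation of an `r`-multi-index with `s` blocks of length `n−1`,
producing a multi-index of length `r + (n−1)s`. -/
def catIdx {n : ℕ} [NeZero n] {r s : ℕ} (k : Fin r → Fin n) (g : Fin s → Fin (n - 1) → Fin n) :
    Fin (r + (n - 1) * s) → Fin n :=
  fun p =>
    if h : (p : ℕ) < r then k ⟨p, h⟩
    else if h2 : 0 < n - 1 then
      g ⟨((p : ℕ) - r) / (n - 1), by
            have hp := p.2
            have h3 : (p : ℕ) - r < (n - 1) * s := by omega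
            exact Nat.div_lt_of_lt_mul h3⟩
        ⟨((p : ℕ) - r) % (n - 1), Nat.mod_lt _ h2⟩
    else 0

/-- The injective map `κ̂ = id_{V^{⊗r}} ⊗ κ^{⊗s}` from the mixed tensor space
`V^{⊗r} ⊗ (V*)^{⊗s}` into ordinary tensor space `V^{⊗(r+(n−1)s)}`, where
`κ(v*_l) = (−q)^l·Σ_{w ∈ S_{n−1}} (−q)^{ℓ(w)} v_{(1,…,l̂,…,n)·w}`. -/
noncomputable def kappaHat (R : Type*) [CommRing R] (q : Rˣ) (n : ℕ) [NeZero n] (r s : ℕ) :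
    (((Fin r → Fin n) × (Fin s → Fin n)) →₀ R) →ₗ[R] TSp R n (r + (n - 1) * s) :=
  Finsupp.linearCombination R fun kl : (Fin r → Fin n) × (Fin s → Fin n) =>
    (((-q) ^ (∑ t, ((kl.2 t : ℕ) + 1)) : Rˣ) : R) •
      ∑ w : Fin s → Equiv.Perm (Fin (n - 1)),
        (((-q) ^ (∑ t, invCount (w t)) : Rˣ) : R) •
          Finsupp.single (catIdx kl.1 (fun t u => omitIdx (kl.2 t) (w t u))) 1

/-- The mixed monomial `x_{i_1k_1}⋯x_{i_rk_r}·x*_{j_1l_1}⋯x*_{j_sl_s}`. -/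
def mixedMono (R : Type*) [CommRing R] (n : ℕ) {r s : ℕ}
    (i k : Fin r → Fin n) (j l : Fin s → Fin n) : FA2 R n :=
  (List.ofFn fun u => Xg R n (i u) (k u)).prod * (List.ofFn fun u => Xs R n (j u) (l u)).prod

/-!
Commutation with the Hecke operators says that the matrix coefficients of `φ` satisfy, in every
pair of adjacent positions, the defining relations of `A_q(n)`, so they induce a linear form on it.

The image of `κ̂` is the intersection of the images of `S_t - q⁻¹`, taken over the adjacent
positions inside the last `s` blocks of length `n - 1`; such an intersection is stable under `φ`.
A tensor in it is determined by its coefficients at the multi-indices that increase along every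
block, because the coefficient vanishes when a block has a repeated entry and changes by a power of
`-q` when a block is sorted. Among these coefficients `κ̂(v_{i|j})` has exactly one that is nonzero,
the unit `(-q)^{Σ j_t}`, so the expansion of `φ(κ̂(v_{k|l}))` can be read off. The values of the
form match because the minors in `ι̂` may be expanded with the permutation on the column indices.
-/

section AdjacentSwaps

variable {k n : ℕ}

/-- The simple transposition of the positions `u` and `u + 1`. -/
def adjSwap (u : ℕ) (hu : u + 1 < k) : Equiv.Perm (Fin k) :=
  Equiv.swap ⟨u, u.lt_of_succ_lt hu⟩ ⟨u + 1, hu⟩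

@[simp]
theorem adjSwap_left (u : ℕ) (hu : u + 1 < k) :
    adjSwap u hu ⟨u, u.lt_of_succ_lt hu⟩ = ⟨u + 1, hu⟩ :=
  Equiv.swap_apply_left _ _

@[simp]
theorem adjSwap_right (u : ℕ) (hu : u + 1 < k) :
    adjSwap u hu ⟨u + 1, hu⟩ = ⟨u, u.lt_of_succ_lt hu⟩ :=
  Equiv.swap_apply_right _ _

@[simp]
theorem adjSwap_adjSwap (u : ℕ) (hu : u + 1 < k) (x : Fin k) :
    adjSwap u hu (adjSwap u hu x) = x :=
  Equiv.swap_apply_self _ _ _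

theorem adjSwap_mul_self (u : ℕ) (hu : u + 1 < k) : adjSwap u hu * adjSwap u hu = 1 :=
  Equiv.swap_mul_self _ _

theorem adjSwap_lt_adjSwap (u : ℕ) (hu : u + 1 < k) {x y : Fin k} (hxy : x < y)
    (hne : ¬(x = ⟨u, u.lt_of_succ_lt hu⟩ ∧ y = ⟨u + 1, hu⟩)) :
    adjSwap u hu x < adjSwap u hu y := by
  simp only [adjSwap, Equiv.swap_apply_def]
  grind

theorem swapIdx_eq_comp_adjSwap (f : Fin k → Fin n) (u : ℕ) (hu : u + 1 < k) :
    swapIdx f u hu = f ∘ adjSwap u hu := by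
  rw [adjSwap, Equiv.swap_comm, Equiv.comp_swap_eq_update]
  rfl

@[simp]
theorem swapIdx_left (f : Fin k → Fin n) (u : ℕ) (hu : u + 1 < k) :
    swapIdx f u hu ⟨u, u.lt_of_succ_lt hu⟩ = f ⟨u + 1, hu⟩ := by
  simp [swapIdx_eq_comp_adjSwap]

@[simp]
theorem swapIdx_right (f : Fin k → Fin n) (u : ℕ) (hu : u + 1 < k) :
    swapIdx f u hu ⟨u + 1, hu⟩ = f ⟨u, u.lt_of_succ_lt hu⟩ := by
  simp [swapIdx_eq_comp_adjSwap]

@[simp]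
theorem swapIdx_swapIdx (f : Fin k → Fin n) (u : ℕ) (hu : u + 1 < k) :
    swapIdx (swapIdx f u hu) u hu = f := by
  ext x
  simp [swapIdx_eq_comp_adjSwap]

theorem swapIdx_eq_self_iff {f : Fin k → Fin n} {u : ℕ} {hu : u + 1 < k} :
    swapIdx f u hu = f ↔ f ⟨u, u.lt_of_succ_lt hu⟩ = f ⟨u + 1, hu⟩ := by
  refine ⟨fun h => by rw [← swapIdx_right f u hu, h], fun h => ?_⟩
  rw [swapIdx, ← h, Function.update_eq_self, h, Function.update_eq_self]

theorem strictMono_of_adjacent_lt {f : Fin k → Fin n}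
    (h : ∀ (u : ℕ) (hu : u + 1 < k), f ⟨u, u.lt_of_succ_lt hu⟩ < f ⟨u + 1, hu⟩) :
    StrictMono f := by
  cases k with
  | zero => exact fun x => x.elim0
  | succ k => exact Fin.strictMono_iff_lt_succ.2 fun u => h u (Nat.succ_lt_succ u.2)

theorem seqInv_swapIdx {f : Fin k → Fin n} (u : ℕ) (hu : u + 1 < k)
    (h : f ⟨u + 1, hu⟩ < f ⟨u, u.lt_of_succ_lt hu⟩) :
    seqInv (swapIdx f u hu) + 1 = seqInv f := by
  let inversions (g : Fin k → Fin n) : Finset (Fin k × Fin k) :=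
    {p | p.1 < p.2 ∧ g p.2 < g p.1}
  let e : Fin k × Fin k ≃ Fin k × Fin k := (adjSwap u hu).prodCongr (adjSwap u hu)
  have inversions_eq : inversions f =
      insert (⟨u, u.lt_of_succ_lt hu⟩, ⟨u + 1, hu⟩)
        ((inversions (f ∘ adjSwap u hu)).map e.toEmbedding) := by
    ext ⟨x, y⟩
    simp only [inversions, e, Finset.mem_filter_univ, Finset.mem_insert, Finset.mem_map_equiv,
      Function.comp_apply, Equiv.prodCongr_symm, Equiv.prodCongr_apply, Prod.map, Prod.mk.injEq]
    simp only [adjSwap, Equiv.symm_swap, Equiv.swap_apply_def]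
    grind
  have not_mem : (⟨u, u.lt_of_succ_lt hu⟩, ⟨u + 1, hu⟩) ∉
      (inversions (f ∘ adjSwap u hu)).map e.toEmbedding := by
    simp [inversions, e, Finset.mem_map_equiv, adjSwap]
  rw [swapIdx_eq_comp_adjSwap]
  change (inversions (f ∘ adjSwap u hu)).card + 1 = (inversions f).card
  rw [inversions_eq, Finset.card_insert_of_notMem not_mem, Finset.card_map]

theorem invCount_mul_adjSwap (w : Equiv.Perm (Fin k)) (u : ℕ) (hu : u + 1 < k)
    (h : w ⟨u, u.lt_of_succ_lt hu⟩ < w ⟨u + 1, hu⟩) :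
    invCount (w * adjSwap u hu) = invCount w + 1 := by
  have key := seqInv_swapIdx (f := swapIdx w u hu) u hu (by simpa using h)
  rw [swapIdx_swapIdx, swapIdx_eq_comp_adjSwap] at key
  exact key.symm

theorem invCount_one : invCount (1 : Equiv.Perm (Fin k)) = 0 := by
  simp only [invCount, Finset.card_eq_zero, Finset.filter_eq_empty_iff]
  exact fun p _ h => h.1.not_gt h.2

theorem invCount_inv (w : Equiv.Perm (Fin k)) : invCount w⁻¹ = invCount w := by
  apply Finset.card_nbij' (fun p => (w⁻¹ p.2, w⁻¹ p.1)) (fun p => (w p.2, w p.1)) <;>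
    simp +contextual [Set.MapsTo, Set.LeftInvOn]

theorem perm_adjSwap_induction {P : Equiv.Perm (Fin k) → Prop} (one : P 1)
    (mul_adjSwap : ∀ (w : Equiv.Perm (Fin k)) (u : ℕ) (hu : u + 1 < k),
      w ⟨u, u.lt_of_succ_lt hu⟩ < w ⟨u + 1, hu⟩ → P w → P (w * adjSwap u hu))
    (w : Equiv.Perm (Fin k)) : P w := by
  induction hN : invCount w using Nat.strong_induction_on generalizing w with
  | _ N ih =>
    by_cases hd : ∃ (u : ℕ) (hu : u + 1 < k), w ⟨u + 1, hu⟩ < w ⟨u, u.lt_of_succ_lt hu⟩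
    · obtain ⟨u, hu, hlt⟩ := hd
      have hs : (w * adjSwap u hu) ⟨u, u.lt_of_succ_lt hu⟩ < (w * adjSwap u hu) ⟨u + 1, hu⟩ := by
        simpa using hlt
      have hw : w * adjSwap u hu * adjSwap u hu = w := by
        rw [mul_assoc, adjSwap_mul_self, mul_one]
      have hlen := invCount_mul_adjSwap _ u hu hs
      rw [hw] at hlen
      exact hw ▸ mul_adjSwap _ u hu hs (ih _ (by omega) _ rfl)
    · have hmono : StrictMono w := strictMono_of_adjacent_lt fun u hu =>
        (not_lt.1 fun h => hd ⟨u, hu, h⟩).lt_of_ne (by simp)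
      have : w = 1 := Equiv.ext fun x => congrFun (hmono.range_inj strictMono_id |>.1 (by simp)) x
      exact this ▸ one

end AdjacentSwaps

section OrderedProducts

variable {M : Type*} [Monoid M] {k : ℕ}

theorem oprod_comp_adjSwap (f : Fin k → M) (u : ℕ) (hu : u + 1 < k)
    (h : Commute (f ⟨u, u.lt_of_succ_lt hu⟩) (f ⟨u + 1, hu⟩)) :
    oprod (f ∘ adjSwap u hu) = oprod f := by
  obtain ⟨v, rfl⟩ : ∃ v, k = u + (2 + v) := ⟨k - (u + 2), by omega⟩
  have fixed_left (x : Fin u) : adjSwap u hu (Fin.castAdd _ x) = Fin.castAdd _ x :=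
    Equiv.swap_apply_of_ne_of_ne (by grind [Fin.val_castAdd]) (by grind [Fin.val_castAdd])
  have fixed_right (x : Fin v) :
      adjSwap u hu (Fin.natAdd u (Fin.natAdd 2 x)) = Fin.natAdd u (Fin.natAdd 2 x) :=
    Equiv.swap_apply_of_ne_of_ne (by simp [Fin.ext_iff]) (by grind [Fin.val_natAdd])
  have split : ∀ g : Fin (u + (2 + v)) → M, oprod g =
      (List.ofFn fun x => g (Fin.castAdd _ x)).prod *
        (g ⟨u, by omega⟩ * g ⟨u + 1, hu⟩ *
          (List.ofFn fun x => g (Fin.natAdd u (Fin.natAdd 2 x))).prod) := by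
    intro g
    rw [oprod, List.ofFn_add, List.ofFn_add, List.prod_append, List.prod_append]
    simp only [List.ofFn_succ, List.ofFn_zero, List.prod_cons, List.prod_nil, mul_one]
    rfl
  simp only [split, Function.comp_apply, adjSwap_left, adjSwap_right, fixed_left, fixed_right,
    h.eq]

theorem oprod_comp_perm (f : Fin k → M) (w : Equiv.Perm (Fin k))
    (h : ∀ a b, a < b → w b < w a → Commute (f (w a)) (f (w b))) :
    oprod (f ∘ w) = oprod f := by
  induction w using perm_adjSwap_induction with
  | one => rfl
  | mul_adjSwap w u hu hlt ih =>
    have hcomm := h ⟨u, u.lt_of_succ_lt hu⟩ ⟨u + 1, hu⟩ (Nat.lt_succ_self u) (by simpa using hlt)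
    rw [Equiv.Perm.coe_mul, ← Function.comp_assoc,
      oprod_comp_adjSwap _ u hu (by simpa using hcomm.symm)]
    refine ih fun a b hab hba => ?_
    have := h (adjSwap u hu a) (adjSwap u hu b)
    simp only [Equiv.Perm.mul_apply, adjSwap_adjSwap] at this
    refine this (adjSwap_lt_adjSwap u hu hab ?_) hba
    rintro ⟨rfl, rfl⟩
    exact hlt.not_gt hba

end OrderedProducts

section QuantumMinors

variable {R : Type*} [CommRing R] {q : Rˣ} {n k : ℕ}

theorem commute_xq {i j k l : Fin n} (hik : i < k) (hlj : l < j) :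
    Commute (xq R q n i j) (xq R q n k l) := by
  simpa only [map_mul] using! RingQuot.mkAlgHom_rel R (QMRel.comm (R := R) (q := q) hik hlj)

theorem qMinorR_eq_qMinorL {rows cols : Fin k → Fin n} (hrows : StrictMono rows)
    (hcols : StrictMono cols) : qMinorR R q n rows cols = qMinorL R q n rows cols := by
  rw [qMinorR, qMinorL, ← Equiv.sum_comp (Equiv.inv (Equiv.Perm (Fin k)))]
  refine Finset.sum_congr rfl fun w _ => ?_
  simp only [Equiv.inv_apply, invCount_inv]
  congr 1
  have reorder : oprod ((fun t => xq R q n (rows (w⁻¹ t)) (cols t)) ∘ w) =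
      oprod fun t => xq R q n (rows (w⁻¹ t)) (cols t) :=
    oprod_comp_perm _ w fun a b hab hba => by simpa using commute_xq (hrows hab) (hcols hba)
  simpa [Function.comp_def] using reorder.symm

end QuantumMinors

section HeckeOperators

variable {R : Type*} [CommRing R] {q : Rˣ} {n m : ℕ}

theorem heckeOpX_apply (p : ℕ) (hp : p + 1 < m) (z : TSp R n m) (a : Fin m → Fin n) :
    heckeOpX R q n m p hp z a =
      if a ⟨p, p.lt_of_succ_lt hp⟩ = a ⟨p + 1, hp⟩ then ((q⁻¹ : Rˣ) : R) * z a
      else if a ⟨p, p.lt_of_succ_lt hp⟩ < a ⟨p + 1, hp⟩ then z (swapIdx a p hp)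
      else z (swapIdx a p hp) + (((q⁻¹ : Rˣ) : R) - q) * z a := by
  induction z using Finsupp.induction_linear with
  | zero => simp
  | add z z' hz hz' => simp only [map_add, Finsupp.add_apply, hz, hz']; split_ifs <;> ring
  | single j c =>
    have swap_eq : swapIdx j p hp = a ↔ j = swapIdx a p hp :=
      ⟨fun h => by rw [← h, swapIdx_swapIdx], fun h => by rw [h, swapIdx_swapIdx]⟩
    rw [heckeOpX, Finsupp.linearCombination_single]
    by_cases hja : j = a
    · subst hja
      split_ifs <;> simp_all [eq_comm (b := swapIdx _ _ _),
        swapIdx_eq_self_iff, mul_comm]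
    · by_cases hjs : j = swapIdx a p hp
      · subst hjs
        rcases lt_trichotomy (a ⟨p, p.lt_of_succ_lt hp⟩) (a ⟨p + 1, hp⟩) with h | h | h
        · simp [h, h.ne, h.ne', h.not_gt, hja]
        · exact absurd (swapIdx_eq_self_iff.2 h) hja
        · simp [h, h.ne, h.ne', h.not_gt, hja]
      · split_ifs <;> simp [swap_eq, hja, hjs]

theorem heckeOpX_single_of_eq {p : ℕ} {hp : p + 1 < m} {b : Fin m → Fin n}
    (hb : b ⟨p, p.lt_of_succ_lt hp⟩ = b ⟨p + 1, hp⟩) :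
    heckeOpX R q n m p hp (Finsupp.single b 1) = ((q⁻¹ : Rˣ) : R) • Finsupp.single b 1 := by
  simp [heckeOpX, hb]

theorem heckeOpX_single_of_lt {p : ℕ} {hp : p + 1 < m} {b : Fin m → Fin n}
    (hb : b ⟨p, p.lt_of_succ_lt hp⟩ < b ⟨p + 1, hp⟩) :
    heckeOpX R q n m p hp (Finsupp.single b 1) = Finsupp.single (swapIdx b p hp) 1 := by
  simp [heckeOpX, hb, hb.ne]

/-- The tensors that are `q`-antisymmetric in the positions `p`, `p + 1`, encoded as the image of
`S - q⁻¹`. The kernel of `S + q` contains this image, and is larger when `q + q⁻¹` is a zero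
divisor. -/
noncomputable def qAntisymm (R : Type*) [CommRing R] (q : Rˣ) (n : ℕ) {m : ℕ} (p : ℕ)
    (hp : p + 1 < m) : Submodule R (TSp R n m) :=
  LinearMap.range (heckeOpX R q n m p hp - ((q⁻¹ : Rˣ) : R) • LinearMap.id)

theorem mem_qAntisymm_iff {p : ℕ} {hp : p + 1 < m} {z : TSp R n m} :
    z ∈ qAntisymm R q n p hp ↔
      (∀ a, a ⟨p, p.lt_of_succ_lt hp⟩ = a ⟨p + 1, hp⟩ → z a = 0) ∧
      ∀ a, a ⟨p, p.lt_of_succ_lt hp⟩ < a ⟨p + 1, hp⟩ → z (swapIdx a p hp) = -q * z a := by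
  constructor
  · rintro ⟨y, rfl⟩
    refine ⟨fun a ha => ?_, fun a ha => ?_⟩
    · simp [heckeOpX_apply, ha]
    · simp only [LinearMap.sub_apply, LinearMap.smul_apply, LinearMap.id_apply,
        Finsupp.sub_apply, Finsupp.smul_apply, smul_eq_mul, heckeOpX_apply, swapIdx_left,
        swapIdx_right, swapIdx_swapIdx, ha, ha.ne, ha.ne', ha.not_gt, if_true, if_false]
      linear_combination (-y a) * q.mul_inv
  · rintro ⟨h_eq, h_lt⟩
    let y : TSp R n m := Finsupp.equivFunOnFinite.symm fun a =>
      if a ⟨p + 1, hp⟩ < a ⟨p, p.lt_of_succ_lt hp⟩ then z (swapIdx a p hp) else 0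
    refine ⟨y, Finsupp.ext fun a => ?_⟩
    rcases lt_trichotomy (a ⟨p, p.lt_of_succ_lt hp⟩) (a ⟨p + 1, hp⟩) with ha | ha | ha
    · simp [heckeOpX_apply, y, ha, ha.ne, ha.not_gt]
    · simp [heckeOpX_apply, ha, h_eq a ha]
    · have := h_lt (swapIdx a p hp) (by simpa using ha)
      rw [swapIdx_swapIdx] at this
      simp only [LinearMap.sub_apply, LinearMap.smul_apply, LinearMap.id_apply, Finsupp.sub_apply,
        Finsupp.smul_apply, smul_eq_mul, heckeOpX_apply, y,
        Finsupp.equivFunOnFinite_symm_apply_apply, swapIdx_left, swapIdx_right, this, ha, ha.ne',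
        ha.not_gt, if_true, if_false]
      ring

variable {p : ℕ} {hp : p + 1 < m} {φ : TSp R n m →ₗ[R] TSp R n m}
  (hφ : φ ∘ₗ heckeOpX R q n m p hp = heckeOpX R q n m p hp ∘ₗ φ)

include hφ

theorem map_mem_qAntisymm {z : TSp R n m} (hz : z ∈ qAntisymm R q n p hp) :
    φ z ∈ qAntisymm R q n p hp := by
  obtain ⟨y, rfl⟩ := hz
  exact ⟨φ y, by simpa using (LinearMap.congr_fun hφ y).symm⟩

theorem coeff_swapIdx_of_lt (a : Fin m → Fin n) {b : Fin m → Fin n}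
    (hb : b ⟨p, p.lt_of_succ_lt hp⟩ < b ⟨p + 1, hp⟩) :
    φ (Finsupp.single (swapIdx b p hp) 1) a = heckeOpX R q n m p hp (φ (Finsupp.single b 1)) a := by
  rw [← heckeOpX_single_of_lt hb]
  exact DFunLike.congr_fun (LinearMap.congr_fun hφ _) a

theorem coeff_row {a b : Fin m → Fin n} (ha : a ⟨p, p.lt_of_succ_lt hp⟩ = a ⟨p + 1, hp⟩)
    (hb : b ⟨p, p.lt_of_succ_lt hp⟩ < b ⟨p + 1, hp⟩) :
    φ (Finsupp.single b 1) a = q * φ (Finsupp.single (swapIdx b p hp) 1) a := by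
  simp [coeff_swapIdx_of_lt hφ a hb, heckeOpX_apply, ha]

theorem coeff_col {a b : Fin m → Fin n} (ha : a ⟨p, p.lt_of_succ_lt hp⟩ < a ⟨p + 1, hp⟩)
    (hb : b ⟨p, p.lt_of_succ_lt hp⟩ = b ⟨p + 1, hp⟩) :
    φ (Finsupp.single b 1) a = q * φ (Finsupp.single b 1) (swapIdx a p hp) := by
  have := DFunLike.congr_fun (LinearMap.congr_fun hφ (Finsupp.single b 1)) a
  simp only [LinearMap.comp_apply, heckeOpX_single_of_eq hb, heckeOpX_apply, ha, ha.ne, if_true,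
    if_false, map_smul, Finsupp.smul_apply, smul_eq_mul] at this
  rw [← this, Units.mul_inv_cancel_left]

theorem coeff_comm {a b : Fin m → Fin n} (ha : a ⟨p, p.lt_of_succ_lt hp⟩ < a ⟨p + 1, hp⟩)
    (hb : b ⟨p + 1, hp⟩ < b ⟨p, p.lt_of_succ_lt hp⟩) :
    φ (Finsupp.single b 1) a = φ (Finsupp.single (swapIdx b p hp) 1) (swapIdx a p hp) := by
  have := coeff_swapIdx_of_lt hφ a (b := swapIdx b p hp) (by simpa using hb)
  simpa [heckeOpX_apply, ha, ha.ne] using this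

theorem coeff_qcomm {a b : Fin m → Fin n} (ha : a ⟨p, p.lt_of_succ_lt hp⟩ < a ⟨p + 1, hp⟩)
    (hb : b ⟨p, p.lt_of_succ_lt hp⟩ < b ⟨p + 1, hp⟩) :
    φ (Finsupp.single b 1) a = φ (Finsupp.single (swapIdx b p hp) 1) (swapIdx a p hp) +
      (q - ((q⁻¹ : Rˣ) : R)) * φ (Finsupp.single (swapIdx b p hp) 1) a := by
  simp only [coeff_swapIdx_of_lt hφ _ hb, heckeOpX_apply, swapIdx_left, swapIdx_right,
    swapIdx_swapIdx, ha, ha.ne, ha.ne', ha.not_gt, if_true, if_false]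
  ring

end HeckeOperators

section DescentOfForm

theorem exists_linearMap_ringQuot {R A M : Type*} [CommRing R] [Ring A] [Algebra R A]
    [AddCommGroup M] [Module R M] {rel : A → A → Prop} (L : A →ₗ[R] M)
    (hL : ∀ x y, rel x y → ∀ u v, L (u * x * v) = L (u * y * v)) :
    ∃ F : RingQuot rel →ₗ[R] M, ∀ a, F (RingQuot.mkAlgHom R rel a) = L a := by
  have closure {x y : A} (h : RingQuot.Rel rel x y) : ∀ u v, L (u * x * v) = L (u * y * v) := by
    induction h with
    | of h => exact hL _ _ h
    | add_left _ ih => exact fun u v => by simp only [mul_add, add_mul, map_add, ih]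
    | @mul_left a b c _ ih => exact fun u v => by simpa only [mul_assoc] using ih u (c * v)
    | @mul_right a b c _ ih => exact fun u v => by simpa only [mul_assoc] using ih (u * a) v
  let F : RingQuot rel →ₗ[R] M :=
    { toFun z := Quot.lift L (fun x y h => by simpa using closure h 1 1) z.toQuot
      map_add' := by
        rintro ⟨⟨a⟩⟩ ⟨⟨b⟩⟩
        rw [RingQuot.add_quot]
        exact map_add L a b
      map_smul' := by
        rintro c ⟨⟨a⟩⟩
        rw [RingQuot.smul_quot]
        exact map_smul L c a }
  exact ⟨F, fun a => by simp [F, RingQuot.mkAlgHom_def, RingQuot.mkRingHom_def]⟩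

variable {R : Type*} [CommRing R] {q : Rˣ} {n m : ℕ}

/-- A list of length `m` read as a multi-index. -/
def idxOfList (L : List (Fin n)) (hL : L.length = m) : Fin m → Fin n := fun t => L[t]

/-- The multi-index `u₁,…,uₚ,i,k,v₁,v₂,…`, with `i` and `k` in two adjacent positions. -/
def idxInsert (u v : List (Fin n)) (h : u.length + (v.length + 2) = m) (i k : Fin n) :
    Fin m → Fin n :=
  idxOfList (u ++ i :: k :: v) (by simpa using h)

section

variable {u v : List (Fin n)} {p : ℕ} (hu : u.length = p)
  (h : u.length + (v.length + 2) = m) (i k : Fin n)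

include hu

theorem idxInsert_left (hp : p < m) : idxInsert u v h i k ⟨p, hp⟩ = i := by
  simp [idxInsert, idxOfList, hu.symm]

theorem idxInsert_right (hp : p + 1 < m) : idxInsert u v h i k ⟨p + 1, hp⟩ = k := by
  simp [idxInsert, idxOfList, hu.symm]

theorem swapIdx_idxInsert (hp : p + 1 < m) :
    swapIdx (idxInsert u v h i k) p hp = idxInsert u v h k i := by
  ext t
  simp only [swapIdx, Function.update_apply, idxInsert, idxOfList, Fin.ext_iff, Fin.getElem_fin]
  grind

end

/-- The value of the form of an endomorphism `φ` of tensor space on the word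
`x_{i₁j₁}⋯x_{iₘjₘ}`; it vanishes on words of other lengths. -/
noncomputable def wordCoeff (φ : TSp R n m →ₗ[R] TSp R n m) (w : List (Fin n × Fin n)) : R :=
  if hw : w.length = m then
    φ (Finsupp.single (idxOfList (w.map Prod.snd) (by simpa)) 1)
      (idxOfList (w.map Prod.fst) (by simpa))
  else 0

theorem wordCoeff_append_cons_cons (φ : TSp R n m →ₗ[R] TSp R n m)
    {w w' : List (Fin n × Fin n)} (h : w.length + (w'.length + 2) = m) (i j k l : Fin n) :
    wordCoeff φ (w ++ (i, j) :: (k, l) :: w') =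
      φ (Finsupp.single (idxInsert (w.map Prod.snd) (w'.map Prod.snd) (by simpa using h) j l) 1)
        (idxInsert (w.map Prod.fst) (w'.map Prod.fst) (by simpa using h) i k) := by
  rw [wordCoeff, dif_pos (by simpa using h)]
  congr <;> simp only [List.map_append, List.map_cons]

/-- The linear extension of `wordCoeff` to the free algebra. -/
noncomputable def freeForm (φ : TSp R n m →ₗ[R] TSp R n m) :
    FreeAlgebra R (Fin n × Fin n) →ₗ[R] R :=
  (FreeAlgebra.basisFreeMonoid R (Fin n × Fin n)).constr R fun w => wordCoeff φ w.toList

theorem basisFreeMonoid_eq_prod (w : FreeMonoid (Fin n × Fin n)) :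
    FreeAlgebra.basisFreeMonoid R (Fin n × Fin n) w =
      (w.toList.map (FreeAlgebra.ι R)).prod := by
  simp [FreeAlgebra.basisFreeMonoid, FreeAlgebra.equivMonoidAlgebraFreeMonoid,
    FreeMonoid.lift_apply]

theorem freeForm_prod (φ : TSp R n m →ₗ[R] TSp R n m) (w : List (Fin n × Fin n)) :
    freeForm φ (w.map (FreeAlgebra.ι R)).prod = wordCoeff φ w := by
  rw [← FreeMonoid.toList_ofList w, ← basisFreeMonoid_eq_prod, freeForm,
    Module.Basis.constr_basis]

theorem freeForm_prod_mul (φ : TSp R n m →ₗ[R] TSp R n m) (w w' : List (Fin n × Fin n))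
    (x y : Fin n × Fin n) :
    freeForm φ ((w.map (FreeAlgebra.ι R)).prod * (FreeAlgebra.ι R x * FreeAlgebra.ι R y) *
      (w'.map (FreeAlgebra.ι R)).prod) = wordCoeff φ (w ++ x :: y :: w') := by
  rw [← freeForm_prod]
  simp [mul_assoc]

theorem freeForm_mul_mul_eq_of_words (φ : TSp R n m →ₗ[R] TSp R n m)
    {x y : FreeAlgebra R (Fin n × Fin n)}
    (h : ∀ w w' : List (Fin n × Fin n),
      freeForm φ ((w.map (FreeAlgebra.ι R)).prod * x * (w'.map (FreeAlgebra.ι R)).prod) =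
        freeForm φ ((w.map (FreeAlgebra.ι R)).prod * y * (w'.map (FreeAlgebra.ι R)).prod))
    (u v : FreeAlgebra R (Fin n × Fin n)) :
    freeForm φ (u * x * v) = freeForm φ (u * y * v) := by
  let B := FreeAlgebra.basisFreeMonoid R (Fin n × Fin n)
  have right (w : List (Fin n × Fin n)) :
      freeForm φ ∘ₗ LinearMap.mulLeft R ((w.map (FreeAlgebra.ι R)).prod * x) =
        freeForm φ ∘ₗ LinearMap.mulLeft R ((w.map (FreeAlgebra.ι R)).prod * y) :=
    B.ext fun w' => by
      simpa only [B, basisFreeMonoid_eq_prod] using! h w w'.toList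
  have left : freeForm φ ∘ₗ LinearMap.mulRight R v ∘ₗ LinearMap.mulRight R x =
      freeForm φ ∘ₗ LinearMap.mulRight R v ∘ₗ LinearMap.mulRight R y :=
    B.ext fun w => by
      simpa only [B, basisFreeMonoid_eq_prod] using! LinearMap.congr_fun (right w.toList) v
  exact LinearMap.congr_fun left u

variable {φ : TSp R n m →ₗ[R] TSp R n m}

theorem freeForm_eq_of_qmRel
    (hφ : ∀ (p : ℕ) (hp : p + 1 < m),
      φ ∘ₗ heckeOpX R q n m p hp = heckeOpX R q n m p hp ∘ₗ φ)
    {x y : FreeAlgebra R (Fin n × Fin n)} (h : QMRel R q n x y)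
    (u v : FreeAlgebra R (Fin n × Fin n)) :
    freeForm φ (u * x * v) = freeForm φ (u * y * v) := by
  refine freeForm_mul_mul_eq_of_words φ (fun w w' => ?_) u v
  by_cases hm : w.length + (w'.length + 2) = m
  · have hp : w.length + 1 < m := by omega
    let row := idxInsert (w.map Prod.fst) (w'.map Prod.fst) (m := m) (by simpa using hm)
    let col := idxInsert (w.map Prod.snd) (w'.map Prod.snd) (m := m) (by simpa using hm)
    have value := wordCoeff_append_cons_cons φ hm
    have hcol (i j k) := coeff_col (hφ _ hp) (a := row i j) (b := col k k)
    have hrow (k i j) := coeff_row (hφ _ hp) (a := row k k) (b := col i j)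
    have hcomm (i j k l) := coeff_comm (hφ _ hp) (a := row i k) (b := col j l)
    have hqcomm (i j k l) := coeff_qcomm (hφ _ hp) (a := row i k) (b := col j l)
    simp only [row, col, idxInsert_left, idxInsert_right, swapIdx_idxInsert, List.length_map,
      forall_const] at hcol hrow hcomm hqcomm
    cases h with
    | col hij => simp [freeForm_prod_mul, value, hcol _ _ _ hij]
    | row hij => simp [freeForm_prod_mul, value, hrow _ _ _ hij]
    | comm hik hlj => simp [freeForm_prod_mul, value, hcomm _ _ _ _ hik hlj]
    | qcomm hik hjl =>
      simp [freeForm_prod_mul, value, hqcomm _ _ _ _ hik hjl, mul_add, add_mul]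
  · have zero (x y : Fin n × Fin n) : wordCoeff φ (w ++ x :: y :: w') = 0 :=
      dif_neg (by simpa using hm)
    cases h <;> simp [freeForm_prod_mul, zero, mul_add, add_mul]

theorem exists_form_of_commute
    (hφ : ∀ (p : ℕ) (hp : p + 1 < m),
      φ ∘ₗ heckeOpX R q n m p hp = heckeOpX R q n m p hp ∘ₗ φ) :
    ∃ F : AqAlg R q n →ₗ[R] R, ∀ a b : Fin m → Fin n,
      F (oprod fun u => xq R q n (a u) (b u)) = φ (Finsupp.single b 1) a := by
  obtain ⟨F, hF⟩ := exists_linearMap_ringQuot (freeForm φ)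
    fun x y h => freeForm_eq_of_qmRel hφ h
  refine ⟨F, fun a b => ?_⟩
  have : oprod (fun u => xq R q n (a u) (b u)) = RingQuot.mkAlgHom R (QMRel R q n)
      ((List.ofFn fun u => (a u, b u)).map (FreeAlgebra.ι R)).prod := by
    simp [oprod, map_list_prod, List.map_ofFn, Function.comp_def, xq]
  rw [this, hF, freeForm_prod, wordCoeff, dif_pos (by simp)]
  congr <;> ext t <;> simp [idxOfList]

end DescentOfForm

section Blocks

variable {n r s k : ℕ}

/-- The positions of an initial segment of length `r` followed by `s` blocks of length `k`. -/
def blockEquiv (r s k : ℕ) : Fin r ⊕ Fin s × Fin k ≃ Fin (r + k * s) :=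
  ((Equiv.refl _).sumCongr (finProdFinEquiv.trans (finCongr (mul_comm s k)))).trans finSumFinEquiv

theorem blockEquiv_inl_val (x : Fin r) : (blockEquiv r s k (Sum.inl x) : ℕ) = x := by
  simp [blockEquiv]

theorem blockEquiv_inr_val (t : Fin s) (u : Fin k) :
    (blockEquiv r s k (Sum.inr (t, u)) : ℕ) = r + (k * t + u) := by
  simp [blockEquiv, add_comm]

theorem succ_blockPos_lt (t : Fin s) {u : ℕ} (hu : u + 1 < k) :
    r + (k * t + u) + 1 < r + k * s := by
  have := (blockEquiv r s k (Sum.inr (t, ⟨u + 1, hu⟩))).2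
  rwa [blockEquiv_inr_val] at this

theorem blockEquiv_inr_eq (t : Fin s) {u : ℕ} (hu : u < k) (h : r + (k * t + u) < r + k * s) :
    (⟨r + (k * t + u), h⟩ : Fin (r + k * s)) = blockEquiv r s k (Sum.inr (t, ⟨u, hu⟩)) :=
  Fin.ext (blockEquiv_inr_val t ⟨u, hu⟩).symm

theorem blockEquiv_inr_succ_eq (t : Fin s) {u : ℕ} (hu : u + 1 < k)
    (h : r + (k * t + u) + 1 < r + k * s) :
    (⟨r + (k * t + u) + 1, h⟩ : Fin (r + k * s)) = blockEquiv r s k (Sum.inr (t, ⟨u + 1, hu⟩)) :=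
  Fin.ext (blockEquiv_inr_val t ⟨u + 1, hu⟩).symm

theorem oprod_blockEquiv {M : Type*} [Monoid M] (h : Fin (r + k * s) → M) :
    oprod h = oprod (fun x => h (blockEquiv r s k (Sum.inl x))) *
      oprod fun t => oprod fun u => h (blockEquiv r s k (Sum.inr (t, u))) := by
  rw [oprod, List.ofFn_add, List.prod_append, List.ofFn_mul', List.prod_flatten, List.map_ofFn]
  congr 1
  refine congrArg (fun f => (List.ofFn f).prod) (funext fun t => ?_)
  refine congrArg (fun f => (List.ofFn f).prod) (funext fun u => congrArg h (Fin.ext ?_))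
  exact (blockEquiv_inr_val t u).symm

section CatIdx

variable [NeZero n] (i : Fin r → Fin n) (g : Fin s → Fin (n - 1) → Fin n)

@[simp]
theorem catIdx_inl (x : Fin r) : catIdx i g (blockEquiv r s (n - 1) (Sum.inl x)) = i x := by
  simp [catIdx, blockEquiv_inl_val]

@[simp]
theorem catIdx_inr (t : Fin s) (u : Fin (n - 1)) :
    catIdx i g (blockEquiv r s (n - 1) (Sum.inr (t, u))) = g t u := by
  have hpos : 0 < n - 1 := u.pos
  have hdiv : ((n - 1) * t + u : ℕ) / (n - 1) = t := by
    rw [Nat.mul_add_div hpos, Nat.div_eq_of_lt u.2, add_zero]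
  simp [catIdx, blockEquiv_inr_val, hpos, hdiv, Nat.mod_eq_of_lt]

theorem catIdx_block (t : Fin s) {u : ℕ} (hu : u < n - 1)
    (h : r + ((n - 1) * t + u) < r + (n - 1) * s) : catIdx i g ⟨_, h⟩ = g t ⟨u, hu⟩ := by
  rw [blockEquiv_inr_eq t hu, catIdx_inr]

theorem catIdx_block_succ (t : Fin s) {u : ℕ} (hu : u + 1 < n - 1)
    (h : r + ((n - 1) * t + u) + 1 < r + (n - 1) * s) : catIdx i g ⟨_, h⟩ = g t ⟨u + 1, hu⟩ := by
  rw [blockEquiv_inr_succ_eq t hu, catIdx_inr]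

variable {i g}

theorem catIdx_inj {i' : Fin r → Fin n} {g' : Fin s → Fin (n - 1) → Fin n} :
    catIdx i g = catIdx i' g' ↔ i = i' ∧ g = g' := by
  refine ⟨fun h => ⟨funext fun x => ?_, funext₂ fun t u => ?_⟩, fun h => by rw [h.1, h.2]⟩
  · simpa using congrFun h (blockEquiv r s (n - 1) (Sum.inl x))
  · simpa using congrFun h (blockEquiv r s (n - 1) (Sum.inr (t, u)))

theorem exists_eq_catIdx (a : Fin (r + (n - 1) * s) → Fin n) :
    ∃ (i : Fin r → Fin n) (g : Fin s → Fin (n - 1) → Fin n), a = catIdx i g := by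
  refine ⟨fun x => a (blockEquiv r s (n - 1) (Sum.inl x)),
    fun t u => a (blockEquiv r s (n - 1) (Sum.inr (t, u))), funext fun p => ?_⟩
  obtain ⟨x | ⟨t, u⟩, rfl⟩ := (blockEquiv r s (n - 1)).surjective p <;> simp

theorem swapIdx_catIdx (t : Fin s) {u : ℕ} (hu : u + 1 < n - 1) :
    swapIdx (catIdx i g) (r + ((n - 1) * t + u)) (succ_blockPos_lt t hu) =
      catIdx i (Function.update g t (swapIdx (g t) u hu)) := by
  funext p
  obtain ⟨x | ⟨t', u'⟩, rfl⟩ := (blockEquiv r s (n - 1)).surjective p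
  · simp [swapIdx, blockEquiv_inr_eq t (u.lt_of_succ_lt hu), blockEquiv_inr_succ_eq t hu]
  · by_cases ht : t' = t
    · subst ht
      simp [swapIdx, blockEquiv_inr_eq t' (u.lt_of_succ_lt hu), blockEquiv_inr_succ_eq t' hu,
        Function.update_apply]
    · simp [swapIdx, blockEquiv_inr_eq t (u.lt_of_succ_lt hu), blockEquiv_inr_succ_eq t hu,
        ht]

end CatIdx

theorem oprod_catIdx {M : Type*} [Monoid M] [NeZero n] (x : Fin n → Fin n → M)
    (i i' : Fin r → Fin n) (g g' : Fin s → Fin (n - 1) → Fin n) :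
    oprod (fun p => x (catIdx i g p) (catIdx i' g' p)) =
      oprod (fun u => x (i u) (i' u)) * oprod fun t => oprod fun u => x (g t u) (g' t u) := by
  simp only [oprod_blockEquiv, catIdx_inl, catIdx_inr]

end Blocks

section OmitIdx

variable {n : ℕ}

theorem omitIdx_strictMono (i : Fin n) : StrictMono (omitIdx i) := by
  intro a b h
  simp only [omitIdx, Fin.lt_def] at h ⊢
  split_ifs <;> simp only <;> omega

theorem range_omitIdx (i : Fin n) : Set.range (omitIdx i) = {i}ᶜ := by
  ext x
  simp only [Set.mem_range, Set.mem_compl_singleton_iff]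
  constructor
  · rintro ⟨t, rfl⟩
    simp only [omitIdx]
    grind
  · intro hx
    have : (x : ℕ) ≠ i := Fin.val_ne_of_ne hx
    rcases this.lt_or_gt with h | h
    · exact ⟨⟨x, by omega⟩, by simp [omitIdx, h]⟩
    · exact ⟨⟨x - 1, by omega⟩, by ext; simp only [omitIdx]; grind⟩

theorem omitIdx_comp_perm_eq_omitIdx_iff {j j' : Fin n} {w : Equiv.Perm (Fin (n - 1))} :
    omitIdx j ∘ w = omitIdx j' ↔ j = j' ∧ w = 1 := by
  refine ⟨fun h => ?_, by rintro ⟨rfl, rfl⟩; rfl⟩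
  have hj : j = j' := by
    have := congrArg Set.range h
    rwa [w.surjective.range_comp, range_omitIdx, range_omitIdx, compl_inj_iff,
      Set.singleton_eq_singleton_iff] at this
  subst hj
  exact ⟨rfl, Equiv.ext fun x => (omitIdx_strictMono j).injective (congrFun h x)⟩

theorem exists_eq_omitIdx_of_strictMono [NeZero n] {f : Fin (n - 1) → Fin n} (hf : StrictMono f) :
    ∃ j, f = omitIdx j := by
  have card_compl : (Finset.univ.image f)ᶜ.card = 1 := by
    rw [Finset.card_compl, Finset.card_image_of_injective _ hf.injective]
    have := NeZero.pos n
    simp only [Finset.card_univ, Fintype.card_fin]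
    omega
  obtain ⟨j, hj⟩ := Finset.card_eq_one.1 card_compl
  refine ⟨j, (hf.range_inj (omitIdx_strictMono j)).1 ?_⟩
  rw [range_omitIdx, ← Finset.coe_singleton, ← hj]
  simp

end OmitIdx

section MixedTensorSpace

variable {R : Type*} [CommRing R] {q : Rˣ} {n r s : ℕ}

/-- The coefficient of `v_f` in `κ(v*_l)`. -/
noncomputable def kappaCoeff (q : Rˣ) (l : Fin n) (f : Fin (n - 1) → Fin n) : R :=
  (((-q) ^ ((l : ℕ) + 1) : Rˣ) : R) *
    ∑ w : Equiv.Perm (Fin (n - 1)), if omitIdx l ∘ w = f then (((-q) ^ invCount w : Rˣ) : R) else 0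

theorem kappaCoeff_eq_zero (l : Fin n) {f : Fin (n - 1) → Fin n} (hf : ¬Function.Injective f) :
    kappaCoeff q l f = 0 := by
  have (w : Equiv.Perm (Fin (n - 1))) : omitIdx l ∘ w ≠ f := by
    rintro rfl
    exact hf ((omitIdx_strictMono l).injective.comp w.injective)
  simp [kappaCoeff, this]

theorem kappaCoeff_swapIdx (l : Fin n) {f : Fin (n - 1) → Fin n} (u : ℕ) (hu : u + 1 < n - 1)
    (hf : f ⟨u, u.lt_of_succ_lt hu⟩ < f ⟨u + 1, hu⟩) :
    kappaCoeff q l (swapIdx f u hu) = -q * kappaCoeff q l f := by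
  have comp_eq_iff (w : Equiv.Perm (Fin (n - 1))) :
      omitIdx l ∘ (w * adjSwap u hu) = swapIdx f u hu ↔ omitIdx l ∘ w = f := by
    rw [swapIdx_eq_comp_adjSwap, Equiv.Perm.coe_mul, ← Function.comp_assoc]
    exact (adjSwap u hu).surjective.injective_comp_right.eq_iff
  simp only [kappaCoeff, mul_left_comm (-(q : R)), Finset.mul_sum]
  rw [← Equiv.sum_comp (Equiv.mulRight (adjSwap u hu))]
  refine Finset.sum_congr rfl fun w _ => ?_
  simp only [Equiv.coe_mulRight, comp_eq_iff]
  split_ifs with hw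
  · subst hw
    rw [invCount_mul_adjSwap w u hu ((omitIdx_strictMono l).lt_iff_lt.1 hf),
      pow_succ' _ (invCount w)]
    simp
  · simp

theorem kappaCoeff_omitIdx (l l' : Fin n) :
    kappaCoeff q l (omitIdx l') = if l = l' then (((-q) ^ ((l : ℕ) + 1) : Rˣ) : R) else 0 := by
  by_cases h : l = l' <;> simp [kappaCoeff, omitIdx_comp_perm_eq_omitIdx_iff, h, invCount_one]

variable [NeZero n]

theorem kappaHat_single (k : Fin r → Fin n) (l : Fin s → Fin n) :
    kappaHat R q n r s (Finsupp.single (k, l) 1) =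
      (((-q) ^ (∑ t, ((l t : ℕ) + 1)) : Rˣ) : R) •
        ∑ w : Fin s → Equiv.Perm (Fin (n - 1)), (((-q) ^ (∑ t, invCount (w t)) : Rˣ) : R) •
          Finsupp.single (catIdx k fun t u => omitIdx (l t) (w t u)) 1 := by
  simp [kappaHat]

theorem kappaHat_single_apply_catIdx (k i : Fin r → Fin n) (l : Fin s → Fin n)
    (g : Fin s → Fin (n - 1) → Fin n) :
    kappaHat R q n r s (Finsupp.single (k, l) 1) (catIdx i g) =
      if k = i then ∏ t, kappaCoeff q (l t) (g t) else 0 := by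
  have blocks_eq_iff (w : Fin s → Equiv.Perm (Fin (n - 1))) :
      (fun t u => omitIdx (l t) (w t u)) = g ↔ ∀ t, omitIdx (l t) ∘ w t = g t :=
    funext_iff
  rw [kappaHat_single]
  simp only [Finsupp.smul_apply, Finsupp.finsetSum_apply, Finsupp.single_apply, catIdx_inj,
    blocks_eq_iff, smul_eq_mul]
  split_ifs with hk
  · simp only [hk, true_and, kappaCoeff, Finset.prod_mul_distrib, Finset.prod_univ_sum,
      Fintype.piFinset_univ, Finset.prod_ite_zero, Finset.mem_univ, true_imp_iff,
      Finset.prod_pow_eq_pow_sum, ← Units.coe_prod, mul_ite, mul_one, mul_zero]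
  · simp [hk]

theorem kappaHat_single_apply_omitIdx (k i : Fin r → Fin n) (l j : Fin s → Fin n) :
    kappaHat R q n r s (Finsupp.single (k, l) 1) (catIdx i fun t => omitIdx (j t)) =
      if (k, l) = (i, j) then (((-q) ^ (∑ t, ((l t : ℕ) + 1)) : Rˣ) : R) else 0 := by
  simp only [kappaHat_single_apply_catIdx, kappaCoeff_omitIdx, Finset.prod_ite_zero,
    Finset.mem_univ, true_imp_iff, Prod.mk.injEq, ite_and, funext_iff (f := l),
    Finset.prod_pow_eq_pow_sum, ← Units.coe_prod]

/-- The tensors that are `q`-antisymmetric inside each of the last `s` blocks of `n - 1`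
positions. They form the image of `κ̂`. -/
noncomputable def blockAlternating (R : Type*) [CommRing R] (q : Rˣ) (n r s : ℕ) :
    Submodule R (TSp R n (r + (n - 1) * s)) :=
  ⨅ (t : Fin s) (u : ℕ) (hu : u + 1 < n - 1), qAntisymm R q n _ (succ_blockPos_lt t hu)

omit [NeZero n] in
theorem mem_blockAlternating_iff {z : TSp R n (r + (n - 1) * s)} :
    z ∈ blockAlternating R q n r s ↔ ∀ (t : Fin s) (u : ℕ) (hu : u + 1 < n - 1),
      z ∈ qAntisymm R q n _ (succ_blockPos_lt t hu) := by
  simp only [blockAlternating, Submodule.mem_iInf]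

theorem kappaHat_single_mem_blockAlternating (k : Fin r → Fin n) (l : Fin s → Fin n) :
    kappaHat R q n r s (Finsupp.single (k, l) 1) ∈ blockAlternating R q n r s := by
  refine mem_blockAlternating_iff.2 fun t u hu =>
    mem_qAntisymm_iff.2 ⟨fun a ha => ?_, fun a ha => ?_⟩
  all_goals
    obtain ⟨i, g, rfl⟩ := exists_eq_catIdx a
    rw [catIdx_block _ _ t (u.lt_of_succ_lt hu), catIdx_block_succ _ _ t hu] at ha
  · have not_injective : ¬Function.Injective (g t) := fun h => by simpa using h ha
    rw [kappaHat_single_apply_catIdx, ite_eq_right_iff]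
    exact fun _ => Finset.prod_eq_zero (Finset.mem_univ t) (kappaCoeff_eq_zero _ not_injective)
  · rw [swapIdx_catIdx t hu, kappaHat_single_apply_catIdx, kappaHat_single_apply_catIdx, mul_ite,
      mul_zero, ← Finset.mul_prod_erase _ _ (Finset.mem_univ t), Function.update_self,
      kappaCoeff_swapIdx _ _ _ ha, mul_assoc, ← Finset.mul_prod_erase _ _ (Finset.mem_univ t)]
    congr! 4 with - t' ht'
    rw [Function.update_of_ne (Finset.ne_of_mem_erase ht')]

theorem kappaHat_mem_blockAlternating (y : ((Fin r → Fin n) × (Fin s → Fin n)) →₀ R) :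
    kappaHat R q n r s y ∈ blockAlternating R q n r s := by
  induction y using Finsupp.induction_linear with
  | zero => simp
  | add y y' hy hy' => simpa only [map_add] using add_mem hy hy'
  | single kl c =>
    rw [← Finsupp.smul_single_one, map_smul]
    exact Submodule.smul_mem _ c (kappaHat_single_mem_blockAlternating kl.1 kl.2)

theorem eq_zero_of_mem_blockAlternating {z : TSp R n (r + (n - 1) * s)}
    (hz : z ∈ blockAlternating R q n r s)
    (h : ∀ (i : Fin r → Fin n) (j : Fin s → Fin n), z (catIdx i fun t => omitIdx (j t)) = 0) :
    z = 0 := by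
  ext a
  rw [Finsupp.zero_apply]
  induction hN : seqInv a using Nat.strong_induction_on generalizing a with
  | _ N ih =>
    obtain ⟨i, g, rfl⟩ := exists_eq_catIdx a
    by_cases hg : ∃ (t : Fin s) (u : ℕ) (hu : u + 1 < n - 1),
        g t ⟨u + 1, hu⟩ ≤ g t ⟨u, u.lt_of_succ_lt hu⟩
    · obtain ⟨t, u, hu, hle⟩ := hg
      obtain ⟨eq_zero, swap_eq⟩ := mem_qAntisymm_iff.1 (mem_blockAlternating_iff.1 hz t u hu)
      have hp : r + ((n - 1) * t + u) + 1 < r + (n - 1) * s := succ_blockPos_lt t hu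
      rw [← catIdx_block_succ i g t hu hp,
        ← catIdx_block i g t (u.lt_of_succ_lt hu) (Nat.lt_of_succ_lt hp)] at hle
      rcases hle.eq_or_lt with heq | hlt
      · exact eq_zero _ heq.symm
      · have shorter := seqInv_swapIdx _ hp hlt
        have := swap_eq (swapIdx (catIdx i g) _ hp) (by simpa using hlt)
        rw [swapIdx_swapIdx] at this
        rw [this, ih _ (by omega) _ rfl, mul_zero]
    · simp only [not_exists, not_le] at hg
      choose j hj using fun t => exists_eq_omitIdx_of_strictMono (strictMono_of_adjacent_lt (hg t))
      rw [funext hj]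
      exact h i j

theorem eq_sum_kappaHat_of_mem_blockAlternating {z : TSp R n (r + (n - 1) * s)}
    (hz : z ∈ blockAlternating R q n r s) :
    z = ∑ i : Fin r → Fin n, ∑ j : Fin s → Fin n,
      (((((-q) ^ (∑ t, ((j t : ℕ) + 1)))⁻¹ : Rˣ) : R) * z (catIdx i fun t => omitIdx (j t))) •
        kappaHat R q n r s (Finsupp.single (i, j) 1) := by
  refine sub_eq_zero.1 (eq_zero_of_mem_blockAlternating (sub_mem hz ?_) fun i j => ?_)
  · exact sum_mem fun i _ => sum_mem fun j _ =>
      Submodule.smul_mem _ _ (kappaHat_mem_blockAlternating _)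
  · simp only [Finsupp.sub_apply, Finsupp.finsetSum_apply, Finsupp.smul_apply,
      kappaHat_single_apply_omitIdx, ← Fintype.sum_prod_type', smul_eq_mul]
    simp only [mul_ite, mul_zero, Prod.mk.eta, Finset.sum_ite_eq', Finset.mem_univ, if_true]
    rw [mul_right_comm, Units.inv_mul, one_mul, sub_self]

theorem range_kappaHat : LinearMap.range (kappaHat R q n r s) = blockAlternating R q n r s := by
  refine le_antisymm ?_ fun z hz => ?_
  · rintro _ ⟨y, rfl⟩
    exact kappaHat_mem_blockAlternating y
  · rw [eq_sum_kappaHat_of_mem_blockAlternating hz]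
    exact sum_mem fun i _ => sum_mem fun j _ => Submodule.smul_mem _ _ ⟨_, rfl⟩

omit [NeZero n] in
theorem map_mem_blockAlternating
    {φ : TSp R n (r + (n - 1) * s) →ₗ[R] TSp R n (r + (n - 1) * s)}
    (hφ : ∀ (p : ℕ) (hp : p + 1 < r + (n - 1) * s),
      φ ∘ₗ heckeOpX R q n _ p hp = heckeOpX R q n _ p hp ∘ₗ φ)
    {z : TSp R n (r + (n - 1) * s)} (hz : z ∈ blockAlternating R q n r s) :
    φ z ∈ blockAlternating R q n r s :=
  mem_blockAlternating_iff.2 fun t u hu =>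
    map_mem_qAntisymm (hφ _ _) (mem_blockAlternating_iff.1 hz t u hu)

end MixedTensorSpace

section IotaHat

theorem oprod_sum_smul {R A α : Type*} [CommRing R] [Ring A] [Algebra R A] [Fintype α] {s : ℕ}
    (c : Fin s → α → R) (P : Fin s → α → A) :
    oprod (fun t => ∑ w, c t w • P t w) =
      ∑ w : Fin s → α, (∏ t, c t (w t)) • oprod fun t => P t (w t) := by
  simp only [oprod, ← MultilinearMap.mkPiAlgebraFin_apply (R := R),
    MultilinearMap.map_sum, MultilinearMap.map_smul_univ]

variable {R : Type*} [CommRing R] {q : Rˣ} {n r s : ℕ}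

theorem iotaHat_Xg (i j : Fin n) : iotaHat R q n (Xg R n i j) = xq R q n i j := by
  rw [iotaHat, Xg, FreeAlgebra.lift_ι_apply]

theorem iotaHat_Xs (i j : Fin n) :
    iotaHat R q n (Xs R n i j) =
      (((((-q) ^ ((i : ℕ) + 1))⁻¹ * (-q) ^ ((j : ℕ) + 1) : Rˣ)) : R) •
        qMinorL R q n (omitIdx i) (omitIdx j) := by
  have shift : (-q) ^ ((j : ℤ) - i) = ((-q) ^ ((i : ℕ) + 1))⁻¹ * (-q) ^ ((j : ℕ) + 1) := by
    rw [← zpow_natCast, ← zpow_natCast, ← zpow_neg, ← zpow_add]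
    congr 1
    push_cast
    ring
  rw [iotaHat, Xs, FreeAlgebra.lift_ι_apply, ← shift,
    ← qMinorR_eq_qMinorL (omitIdx_strictMono i) (omitIdx_strictMono j)]
  rfl

variable [NeZero n]

theorem iotaHat_mixedMono (i k : Fin r → Fin n) (j l : Fin s → Fin n) :
    iotaHat R q n (mixedMono R n i k j l) =
      (((((-q) ^ (∑ t, ((j t : ℕ) + 1)))⁻¹ * (-q) ^ (∑ t, ((l t : ℕ) + 1)) : Rˣ)) : R) •
        ∑ w : Fin s → Equiv.Perm (Fin (n - 1)), (((-q) ^ (∑ t, invCount (w t)) : Rˣ) : R) •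
          oprod fun p => xq R q n (catIdx i (fun t => omitIdx (j t)) p)
            (catIdx k (fun t u => omitIdx (l t) (w t u)) p) := by
  have split : iotaHat R q n (mixedMono R n i k j l) =
      oprod (fun u => xq R q n (i u) (k u)) *
        oprod fun t => iotaHat R q n (Xs R n (j t) (l t)) := by
    simp only [mixedMono, map_mul, map_list_prod, List.map_ofFn, oprod, Function.comp_def,
      iotaHat_Xg]
  simp only [split, iotaHat_Xs, qMinorL, Finset.smul_sum, smul_smul, oprod_sum_smul,
    Finset.mul_sum, oprod_catIdx, mul_smul_comm, Finset.prod_mul_distrib, ← Units.coe_prod,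
    Finset.prod_inv_distrib, Finset.prod_pow_eq_pow_sum, Units.val_mul]

theorem form_iotaHat_mixedMono {φ : TSp R n (r + (n - 1) * s) →ₗ[R] TSp R n (r + (n - 1) * s)}
    {F : AqAlg R q n →ₗ[R] R}
    (hF : ∀ a b, F (oprod fun u => xq R q n (a u) (b u)) = φ (Finsupp.single b 1) a)
    (i k : Fin r → Fin n) (j l : Fin s → Fin n) :
    F (iotaHat R q n (mixedMono R n i k j l)) =
      ((((-q) ^ (∑ t, ((j t : ℕ) + 1)))⁻¹ : Rˣ) : R) *
        φ (kappaHat R q n r s (Finsupp.single (k, l) 1)) (catIdx i fun t => omitIdx (j t)) := by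
  simp only [iotaHat_mixedMono, kappaHat_single, map_smul, map_sum, hF, Finsupp.smul_apply,
    Finsupp.finsetSum_apply, smul_eq_mul, Units.val_mul, mul_assoc]

end IotaHat

/-- if `φ ∈ End_R(V^{⊗m})` (`m = r+(n−1)s`) commutes with all
Hecke operators `S_t` and has matrix coefficients `γ`, then (i) the linear
form `x_{s_1t_1}⋯x_{s_mt_m} ↦ γ(s,t)` descends to a well-defined form `φ̃` on
`A_q(n,m)`; (ii) `φ` preserves the image of `κ̂`; (iii)
`φ(κ̂(v_{k|l})) = Σ_{i,j} φ̃(ι(x_{i_1k_1}⋯x_{i_rk_r}x*_{j_1l_1}⋯x*_{j_sl_s}))·κ̂(v_{i|j})`. -/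
theorem stmt9 (R : Type*) [CommRing R] (q : Rˣ) (n : ℕ) [NeZero n] (r s : ℕ)
    (φ : TSp R n (r + (n - 1) * s) →ₗ[R] TSp R n (r + (n - 1) * s))
    (hφ : ∀ (p : ℕ) (hp : p + 1 < r + (n - 1) * s),
      φ ∘ₗ heckeOpX R q n (r + (n - 1) * s) p hp =
        heckeOpX R q n (r + (n - 1) * s) p hp ∘ₗ φ)
    (γ : (Fin (r + (n - 1) * s) → Fin n) → (Fin (r + (n - 1) * s) → Fin n) → R)
    (hγ : ∀ a b, γ a b = φ (Finsupp.single b 1) a)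
    (hmem : ∀ (i k : Fin r → Fin n) (j l : Fin s → Fin n),
      iotaHat R q n (mixedMono R n i k j l) ∈ AqDeg R q n (r + (n - 1) * s)) :
    ∃ φt : ↥(AqDeg R q n (r + (n - 1) * s)) →ₗ[R] R,
      (∀ (a b : Fin (r + (n - 1) * s) → Fin n)
        (h : (List.ofFn fun u => xq R q n (a u) (b u)).prod ∈ AqDeg R q n (r + (n - 1) * s)),
        φt ⟨(List.ofFn fun u => xq R q n (a u) (b u)).prod, h⟩ = γ a b) ∧
      (∀ z ∈ LinearMap.range (kappaHat R q n r s),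
        φ z ∈ LinearMap.range (kappaHat R q n r s)) ∧
      (∀ (k : Fin r → Fin n) (l : Fin s → Fin n),
        φ (kappaHat R q n r s (Finsupp.single (k, l) 1)) =
          ∑ i : Fin r → Fin n, ∑ j : Fin s → Fin n,
            φt ⟨iotaHat R q n (mixedMono R n i k j l), hmem i k j l⟩ •
              kappaHat R q n r s (Finsupp.single (i, j) 1)) := by
  obtain ⟨F, hF⟩ := exists_form_of_commute hφ
  refine ⟨F.domRestrict _, fun a b _ => (hF a b).trans (hγ a b).symm, fun z hz => ?_,
    fun k l => ?_⟩
  · rw [range_kappaHat] at hz ⊢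
    exact map_mem_blockAlternating hφ hz
  · have image_mem := map_mem_blockAlternating hφ (kappaHat_mem_blockAlternating
      (Finsupp.single (k, l) 1))
    simpa only [LinearMap.domRestrict_apply, form_iotaHat_mixedMono hF] using
      eq_sum_kappaHat_of_mem_blockAlternating image_mem
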